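/- Let $G$ be a finite graph and suppose no vertex of $G$ has more than one cycle in its $r$-neighborhood. Then for any two vertices $i, j$ of $G$ there are at most two paths (self-avoiding walks) of length at most $r$ from $i$ to $j$. -/

import Mathlib

/-!
If `G` has at most one cycle and two paths from `u` to `v` start with different edges, then the
first edge `e` of one of them is not a bridge, so it lies on the cycle and `G - e` is acyclic. A
third path that avoids `e` agrees with the second in `G - e`; a third path through `e` must start
with `e`, and then its tail agrees with the tail of the first in `G - e`. Stripping common first
edges shows that such a graph has at most two paths between any two vertices. Paths of length at
most `r` starting at `i` stay in the ball of radius `r` about `i`, so only the cycles of that ball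
matter.
-/

section

open SimpleGraph

variable {V : Type*} {G : SimpleGraph V}

theorem eq_of_isAcyclic_deleteEdges {u v : V} {e : Sym2 V} (hG : (G.deleteEdges {e}).IsAcyclic)
    {p q : G.Walk u v} (hp : p.IsPath) (hq : q.IsPath) (hpe : e ∉ p.edges) (hqe : e ∉ q.edges) :
    p = q := by
  have hpq : p.toDeleteEdge e hpe = q.toDeleteEdge e hqe :=
    congrArg Subtype.val <| (hG.subsingleton_path u v).elim
      ⟨p.toDeleteEdge e hpe, hp.transfer _⟩ ⟨q.toDeleteEdge e hqe, hq.transfer _⟩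
  simpa only [Walk.map_toDeleteEdges_eq] using
    congrArg (Walk.map (.ofLE (G.deleteEdges_le {e}))) hpq

/-- `G` has at most one cycle. Cycles are identified with their edge sets, so that neither the base
point nor the direction of a closed walk matters. -/
def HasAtMostOneCycle (G : SimpleGraph V) : Prop :=
  ∀ ⦃u v : V⦄ (c : G.Walk u u) (d : G.Walk v v), c.IsCycle → d.IsCycle → c.edgeSet = d.edgeSet

namespace HasAtMostOneCycle

theorem isAcyclic_deleteEdges (hG : HasAtMostOneCycle G) {e : Sym2 V} (he : e ∈ G.edgeSet)
    (hbridge : ¬ G.IsBridge e) : (G.deleteEdges {e}).IsAcyclic := by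
  intro v d hd
  obtain ⟨u, c, hc, hec⟩ : ∃ (u : V) (c : G.Walk u u), c.IsCycle ∧ e ∈ c.edges := by
    simpa only [isBridge_iff_forall_cycle_notMem he, not_forall, not_not, exists_prop]
      using hbridge
  have hcd : c.edgeSet = d.edgeSet := by
    rw [hG c _ hc (hd.mapLe (G.deleteEdges_le {e})), Walk.edgeSet_mapLe_eq_edgeSet]
  have hed : e ∈ d.edgeSet := hcd ▸ hec
  simpa using d.edges_subset_edgeSet hed

theorem eq_cons_or_eq_cons (hG : HasAtMostOneCycle G) {u v x y : V} (hxy : x ≠ y)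
    {hx : G.Adj u x} {p : G.Walk x v} (hp : (p.cons hx).IsPath)
    {hy : G.Adj u y} {q : G.Walk y v} (hq : (q.cons hy).IsPath)
    {w : G.Walk u v} (hw : w.IsPath) : w = p.cons hx ∨ w = q.cons hy := by
  have notMem_tail {t : G.Walk x v} (ht : (t.cons hx).IsPath) : s(u, x) ∉ t.edges :=
    ((Walk.isTrail_cons _ _).1 ht.isTrail).2
  have notMem_q : s(u, x) ∉ (q.cons hy).edges := fun h =>
    hxy ((hq.eq_snd_of_mem_edges h).trans (Walk.snd_cons q hy))
  have not_isBridge : ¬ G.IsBridge s(u, x) := by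
    rw [isBridge_iff_forall_walk_mem_edges, not_forall]
    refine ⟨(q.cons hy).append p.reverse, ?_⟩
    rw [Walk.edges_append, List.mem_append, Walk.edges_reverse, List.mem_reverse]
    exact not_or_intro notMem_q (notMem_tail hp)
  have acyclic := hG.isAcyclic_deleteEdges hx not_isBridge
  by_cases hxw : s(u, x) ∈ w.edges
  · cases w with
    | nil => simp at hxw
    | cons hz t =>
      obtain rfl := (hw.eq_snd_of_mem_edges hxw).trans (Walk.snd_cons t hz)
      exact .inl <| congrArg (Walk.cons hz) <| eq_of_isAcyclic_deleteEdges acyclic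
        hw.of_cons hp.of_cons (notMem_tail hw) (notMem_tail hp)
  · exact .inr (eq_of_isAcyclic_deleteEdges acyclic hw hq hxw notMem_q)

theorem path_eq_or_eq_or_eq (hG : HasAtMostOneCycle G) {u v : V} {p q w : G.Walk u v}
    (hp : p.IsPath) (hq : q.IsPath) (hw : w.IsPath) : p = q ∨ p = w ∨ q = w := by
  induction p with
  | nil => exact .inl (Walk.isPath_iff_nil.1 hq).eq_nil.symm
  | @cons u x v hx p ih =>
    cases q with
    | nil => simp at hp
    | @cons _ y _ hy q =>
      cases w with
      | nil => simp at hp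
      | @cons _ z _ hz w =>
        by_cases hxy : x = y
        · by_cases hxz : x = z
          · subst hxy hxz
            simpa only [Walk.cons.injEq, heq_eq_eq, true_and] using
              ih hp.of_cons hq.of_cons hw.of_cons
          · have := hG.eq_cons_or_eq_cons hxz hp hw hq
            tauto
        · have := hG.eq_cons_or_eq_cons hxy hp hq hw
          tauto

end HasAtMostOneCycle

theorem hasAtMostOneCycle_induce {s : Set V}
    (h : ∀ ⦃u v : V⦄ (c : G.Walk u u) (d : G.Walk v v), c.IsCycle → d.IsCycle →
      (∀ z ∈ c.support, z ∈ s) → (∀ z ∈ d.support, z ∈ s) → c.edgeSet = d.edgeSet) :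
    HasAtMostOneCycle (G.induce s) := by
  intro u v c d hc hd
  let ι := (Embedding.induce (G := G) s).toHom
  have hι : Function.Injective ι := Subtype.val_injective
  have mem_of_mem_support_map {x : s} (w : (G.induce s).Walk x x) :
      ∀ z ∈ (w.map ι).support, z ∈ s := by
    simp only [Walk.support_map, List.mem_map]
    rintro _ ⟨z, -, rfl⟩
    exact z.2
  have hcd := h (c.map ι) (d.map ι) (hc.map hι) (hd.map hι)
    (mem_of_mem_support_map c) (mem_of_mem_support_map d)
  rw [Walk.edgeSet_map, Walk.edgeSet_map] at hcd
  exact (Sym2.map.injective hι).image_injective hcd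

/-- The vertices of the `r`-neighborhood of `v`. The extended distance is used because
`SimpleGraph.dist` is `0` between vertices of different components. -/
def closedBall (G : SimpleGraph V) (v : V) (r : ℕ) : Set V := {z | G.edist v z ≤ r}

theorem mem_closedBall_of_mem_support {r : ℕ} {i j z : V} {p : G.Walk i j} (hp : p.length ≤ r)
    (hz : z ∈ p.support) : z ∈ closedBall G i r := by
  classical
  exact (p.takeUntil z hz).edist_le.trans
    (by exact_mod_cast (p.length_takeUntil_le_length hz).trans hp)

theorem dist_le_of_mem_closedBall {r : ℕ} {v z : V} (hz : z ∈ closedBall G v r) :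
    G.dist v z ≤ r :=
  ENat.toNat_le_of_le_natCast hz

theorem hasAtMostOneCycle_induce_closedBall [DecidableEq V] {r : ℕ} {v : V}
    (h : ∀ (u₁ u₂ : V) (c₁ : G.Walk u₁ u₁) (c₂ : G.Walk u₂ u₂), c₁.IsCycle → c₂.IsCycle →
      (∀ z ∈ c₁.support, G.dist v z ≤ r) → (∀ z ∈ c₂.support, G.dist v z ≤ r) →
      c₁.edges.toFinset = c₂.edges.toFinset) :
    HasAtMostOneCycle (G.induce (closedBall G v r)) := by
  refine hasAtMostOneCycle_induce fun u₁ u₂ c₁ c₂ hc₁ hc₂ hs₁ hs₂ => ?_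
  simpa only [← Walk.coe_edges_toFinset, Finset.coe_inj] using
    h u₁ u₂ c₁ c₂ hc₁ hc₂ (fun z hz => dist_le_of_mem_closedBall (hs₁ z hz))
      (fun z hz => dist_le_of_mem_closedBall (hs₂ z hz))

theorem isPath_induce {s : Set V} {u v : V} {p : G.Walk u v} (hp : p.IsPath)
    (hs : ∀ z ∈ p.support, z ∈ s) : (p.induce s hs).IsPath :=
  .of_map (f := (Embedding.induce s).toHom) (by rwa [Walk.map_induce])

theorem eq_of_induce_eq {s : Set V} {u v : V} {p q : G.Walk u v} {hp : ∀ z ∈ p.support, z ∈ s}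
    {hq : ∀ z ∈ q.support, z ∈ s} (h : p.induce s hp = q.induce s hq) : p = q :=
  (p.map_induce hp).symm.trans <|
    (congrArg (Walk.map (Embedding.induce s).toHom) h).trans (q.map_induce hq)

end

theorem stmt_4_general {V : Type*} (G : SimpleGraph V) (r : ℕ) (i j : V)
    (honeCycle : HasAtMostOneCycle (G.induce (closedBall G i r))) (p₁ p₂ p₃ : G.Walk i j)
    (h₁ : p₁.IsPath) (h₂ : p₂.IsPath) (h₃ : p₃.IsPath)
    (l₁ : p₁.length ≤ r) (l₂ : p₂.length ≤ r) (l₃ : p₃.length ≤ r) :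
    p₁ = p₂ ∨ p₁ = p₃ ∨ p₂ = p₃ := by
  have support_subset {p : G.Walk i j} (hp : p.length ≤ r) :
      ∀ z ∈ p.support, z ∈ closedBall G i r := fun _ => mem_closedBall_of_mem_support hp
  exact (honeCycle.path_eq_or_eq_or_eq (isPath_induce h₁ (support_subset l₁))
    (isPath_induce h₂ (support_subset l₂)) (isPath_induce h₃ (support_subset l₃))).imp
      eq_of_induce_eq (.imp eq_of_induce_eq eq_of_induce_eq)

/-- **At most two short paths under the one-cycle condition.** If in a finite graph `G` no
vertex has more than one cycle in its `r`-neighborhood (formalized: any two cycles lying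
entirely within distance `r` of a common vertex have the same edge set), then for any two
vertices `i, j` there are at most two paths of length at most `r` from `i` to `j`: among any
three such paths, two coincide. -/
theorem stmt_4 {V : Type*} [Fintype V] [DecidableEq V] (G : SimpleGraph V) (r : ℕ)
    (honeCycle : ∀ (v u₁ u₂ : V) (c₁ : G.Walk u₁ u₁) (c₂ : G.Walk u₂ u₂),
      c₁.IsCycle → c₂.IsCycle →
      (∀ z ∈ c₁.support, G.dist v z ≤ r) → (∀ z ∈ c₂.support, G.dist v z ≤ r) →
      c₁.edges.toFinset = c₂.edges.toFinset)
    (i j : V) (p₁ p₂ p₃ : G.Walk i j)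
    (h₁ : p₁.IsPath) (h₂ : p₂.IsPath) (h₃ : p₃.IsPath)
    (l₁ : p₁.length ≤ r) (l₂ : p₂.length ≤ r) (l₃ : p₃.length ≤ r) :
    p₁ = p₂ ∨ p₁ = p₃ ∨ p₂ = p₃ := by
  exact stmt_4_general G r i j (hasAtMostOneCycle_induce_closedBall (honeCycle i))
    p₁ p₂ p₃ h₁ h₂ h₃ l₁ l₂ l₃
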